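/- arXiv:1711.00389 — 3 statements merged into one kernel-verified Lean document; each statement's English description precedes it below -/
import Mathlib

section
/- Let s ∈ (0,2) and ξ ∈ ℝ. Let (T_j) be a sequence of positive integers tending to infinity, (t_j) integers with 0 ≤ t_j ≤ 2T_j and t_j/T_j → s, and (x_j) integers with t_j + x_j even and x_j/√(T_j) → ξ. Then (√(T_j)/2) · [C(t_j, (t_j+x_j)/2) · C(2T_j−t_j, ((2T_j−t_j)+x_j)/2) / C(2T_j, T_j)] converges to (1/√(π s(2−s))) · exp(−ξ²/(s(2−s))) as j → ∞, where C(n,k) denotes the binomial coefficient. That is, the single-time distribution of the classical random-walk excursion converges to the probability density of the Brownian bridge of duration 2. -/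
open scoped Real
open Filter

/-!
Stirling's formula gives `C(n, k) ~ √(n / (2π k (n - k))) * exp (n H(k / n))`, where `H` is the
binary entropy. Since `H(p) - log 2 ~ -2 (p - 1/2) ^ 2` as `p → 1/2`, the mass `C(n, k) / 2 ^ n`
is asymptotically Gaussian in `2 k - n` on the scale `√n`: this is the local de Moivre–Laplace
theorem. In `C(m, p) C(n, q) / C(m + n, r)` the powers of two cancel, so this quotient converges,
after multiplication by the scale, to a quotient of Gaussian densities; for the excursion, these
combine to the density of the Brownian bridge.
-/

open Asymptotics Topology Set

lemma exp_mul_binEntropy_div_add {a b : ℕ} (ha : 0 < a) (hb : 0 < b) :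
    Real.exp (((a : ℝ) + b) * Real.binEntropy (a / (a + b))) =
      ((a : ℝ) + b) ^ (a + b) / ((a : ℝ) ^ a * (b : ℝ) ^ b) := by
  have hcompl : 1 - (a : ℝ) / (a + b) = b / (a + b) := by field_simp; ring
  have hlog : ((a : ℝ) + b) * Real.binEntropy (a / (a + b)) =
      (a + b) * Real.log (a + b) - (a * Real.log a + b * Real.log b) := by
    rw [Real.binEntropy, hcompl, inv_div, inv_div, Real.log_div (by positivity) (by positivity),
      Real.log_div (by positivity) (by positivity)]
    field_simp
    ring
  rw [hlog, Real.exp_sub, Real.exp_add, ← Nat.cast_add, Real.exp_nat_mul, Real.exp_nat_mul,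
    Real.exp_nat_mul, Real.exp_log (by positivity), Real.exp_log (by positivity),
    Real.exp_log (by positivity)]

lemma contDiffOn_binEntropy {n : WithTop ℕ∞} : ContDiffOn ℝ n Real.binEntropy (Ioo 0 1) := by
  have hlog (f : ℝ → ℝ) (hf : ContDiff ℝ n f) (h0 : ∀ p ∈ Ioo 0 1, f p ≠ 0) :
      ContDiffOn ℝ n (fun p => f p * Real.log (f p)) (Ioo 0 1) :=
    hf.contDiffOn.mul (hf.contDiffOn.log h0)
  refine ((hlog id contDiff_id fun p hp => hp.1.ne').add
    (hlog (fun p => 1 - p) (by fun_prop) fun p hp => (sub_pos.2 hp.2).ne')).neg.congr fun p _ => ?_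
  simp only [Real.binEntropy, Real.log_inv, id]
  ring

lemma binEntropy_sub_log_two_isEquivalent :
    (fun p => Real.binEntropy p - Real.log 2) ~[𝓝 2⁻¹] fun p => -2 * (p - 2⁻¹) ^ 2 := by
  have hmem : (2⁻¹ : ℝ) ∈ Ioo (0 : ℝ) 1 := by norm_num
  have hderiv2 : iteratedDerivWithin 2 Real.binEntropy (Ioo 0 1) 2⁻¹ = -4 := by
    rw [iteratedDerivWithin_of_isOpen_eq_iterate isOpen_Ioo hmem, Real.deriv2_binEntropy]
    norm_num
  have hderiv1 : derivWithin Real.binEntropy (Ioo 0 1) 2⁻¹ = 0 := by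
    rw [derivWithin_of_isOpen isOpen_Ioo hmem, Real.deriv_binEntropy]
    norm_num
  have htaylor (p : ℝ) : taylorWithinEval Real.binEntropy 2 (Ioo 0 1) 2⁻¹ p =
      Real.log 2 + -2 * (p - 2⁻¹) ^ 2 := by
    simp only [taylorWithinEval_succ, taylor_within_zero_eval, zero_add,
      iteratedDerivWithin_one, one_add_one_eq_two, hderiv1, hderiv2, Real.binEntropy_two_inv,
      smul_eq_mul]
    push_cast
    ring
  have h := taylor_isLittleO (convex_Ioo (0 : ℝ) 1) hmem (contDiffOn_binEntropy (n := 2))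
  rw [isOpen_Ioo.nhdsWithin_eq hmem] at h
  refine IsLittleO.isEquivalent ((h.congr_left fun p => ?_).const_mul_right (by norm_num))
  rw [htaylor, Pi.sub_apply]
  ring

lemma stirling_add_div_stirling_mul_stirling {a b : ℕ} (ha : 0 < a) (hb : 0 < b) :
    √(2 * ((a : ℝ) + b) * π) * (((a : ℝ) + b) / Real.exp 1) ^ (a + b) /
        ((√(2 * a * π) * (a / Real.exp 1) ^ a) * (√(2 * b * π) * (b / Real.exp 1) ^ b)) =
      √(((a : ℝ) + b) / (2 * π * a * b)) *
        Real.exp (((a : ℝ) + b) * Real.binEntropy (a / (a + b))) := by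
  have hsqrt : √(2 * ((a : ℝ) + b) * π) / (√(2 * a * π) * √(2 * b * π)) =
      √(((a : ℝ) + b) / (2 * π * a * b)) := by
    rw [← Real.sqrt_mul (by positivity), ← Real.sqrt_div (by positivity)]
    congr 1
    field_simp
  rw [exp_mul_binEntropy_div_add ha hb, ← hsqrt, div_pow, div_pow, div_pow,
    pow_add (Real.exp 1)]
  field_simp

lemma isEquivalent_choose_binEntropy {ι : Type*} {l : Filter ι} {n k : ι → ℕ}
    (hk : Tendsto k l atTop) (hnk : Tendsto (fun i => n i - k i) l atTop) :
    (fun i => ((n i).choose (k i) : ℝ)) ~[l] fun i =>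
      √(n i / (2 * π * k i * (n i - k i))) * Real.exp (n i * Real.binEntropy (k i / n i)) := by
  have hn : Tendsto n l atTop := tendsto_atTop_mono (fun i => Nat.sub_le _ _) hnk
  have hstirling {m : ι → ℕ} (hm : Tendsto m l atTop) :=
    Stirling.factorial_isEquivalent_stirling.comp_tendsto hm
  refine (((hstirling hn).div ((hstirling hk).mul (hstirling hnk))).congr_left ?_).congr_right ?_
  · filter_upwards [hnk.eventually_gt_atTop 0] with i hi
    exact (Nat.cast_choose ℝ (by omega)).symm
  · filter_upwards [hk.eventually_gt_atTop 0, hnk.eventually_gt_atTop 0] with i hki hnki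
    have hcast : (n i : ℝ) - k i = (n i - k i : ℕ) := (Nat.cast_sub (by omega)).symm
    have hadd : n i = k i + (n i - k i) := by omega
    have hadd' : (n i : ℝ) = k i + (n i - k i : ℕ) := by exact_mod_cast hadd
    have h := stirling_add_div_stirling_mul_stirling hki hnki
    rw [← hadd', ← hadd] at h
    rw [hcast]
    exact h

section LocalLimit

variable {ι : Type*} {l : Filter ι} {T : ι → ℝ}

lemma tendsto_natCast_div_two_inv {n k : ι → ℕ} {a α : ℝ} (hT : Tendsto T l atTop) (ha : 0 < a)
    (hn : Tendsto (fun i => n i / T i) l (𝓝 a))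
    (hk : Tendsto (fun i => (2 * k i - n i) / √(T i)) l (𝓝 α)) :
    Tendsto (fun i => (k i : ℝ) / n i) l (𝓝 2⁻¹) := by
  have hdev : Tendsto (fun i => (2 * k i - n i) / √(T i) / √(T i) / (n i / T i)) l (𝓝 0) := by
    simpa only [zero_div] using! (hk.div_atTop (Real.tendsto_sqrt_atTop.comp hT)).div hn ha.ne'
  have h := (hdev.const_add 1).div_const 2
  rw [add_zero, one_div] at h
  refine h.congr' ?_
  filter_upwards [hT.eventually_gt_atTop 0, (hT.num ha hn).eventually_gt_atTop 0] with i hTi hni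
  rw [div_div _ √(T i) √(T i), Real.mul_self_sqrt hTi.le]
  field_simp
  ring

lemma tendsto_natSub_atTop_of_tendsto_div {n k : ι → ℕ} {p : ℝ}
    (hn : Tendsto (fun i => (n i : ℝ)) l atTop) (hp : p < 1)
    (hk : Tendsto (fun i => (k i : ℝ) / n i) l (𝓝 p)) :
    Tendsto (fun i => n i - k i) l atTop := by
  have hcompl : Tendsto (fun i => ((n i : ℝ) - k i) / n i) l (𝓝 (1 - p)) := by
    refine (hk.const_sub 1).congr' ?_
    filter_upwards [hn.eventually_gt_atTop 0] with i hni
    rw [sub_div, div_self hni.ne']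
  have hsub : Tendsto (fun i => (n i : ℝ) - k i) l atTop := hn.num (sub_pos.2 hp) hcompl
  refine tendsto_natCast_atTop_iff.1 (hsub.congr' ?_)
  filter_upwards [hsub.eventually_gt_atTop 0] with i hi
  rw [Nat.cast_sub (by exact_mod_cast (sub_pos.1 hi).le)]

lemma tendsto_mul_binEntropy_sub_log_two {n k : ι → ℕ} {a α : ℝ} (hT : Tendsto T l atTop)
    (ha : 0 < a) (hn : Tendsto (fun i => n i / T i) l (𝓝 a))
    (hk : Tendsto (fun i => (2 * k i - n i) / √(T i)) l (𝓝 α)) :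
    Tendsto (fun i => n i * (Real.binEntropy (k i / n i) - Real.log 2)) l
      (𝓝 (-(α ^ 2 / (2 * a)))) := by
  have hequiv : (fun i => n i * (Real.binEntropy (k i / n i) - Real.log 2)) ~[l]
      fun i => n i * (-2 * (k i / n i - 2⁻¹) ^ 2) :=
    IsEquivalent.refl.mul
      (binEntropy_sub_log_two_isEquivalent.comp_tendsto (tendsto_natCast_div_two_inv hT ha hn hk))
  refine hequiv.symm.tendsto_nhds ?_
  refine ((hk.pow 2).div (hn.const_mul 2) (by positivity)).neg.congr' ?_
  filter_upwards [hT.eventually_gt_atTop 0, (hT.num ha hn).eventually_gt_atTop 0] with i hTi hni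
  rw [Pi.div_apply, div_pow, Real.sq_sqrt hTi.le]
  field_simp

lemma tendsto_sqrt_mul_sqrt_div {n k : ι → ℕ} {a : ℝ} (hT : Tendsto T l atTop) (ha : 0 < a)
    (hn : Tendsto (fun i => n i / T i) l (𝓝 a))
    (hk : Tendsto (fun i => (k i : ℝ) / n i) l (𝓝 2⁻¹)) :
    Tendsto (fun i => √(T i) * √(n i / (2 * π * k i * (n i - k i)))) l (𝓝 √(2 / (π * a))) := by
  have hvariance : Tendsto (fun i => n i / T i * (2 * π * (k i / n i) * (1 - k i / n i))) l
      (𝓝 (a * (2 * π * 2⁻¹ * (1 - 2⁻¹)))) :=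
    hn.mul ((hk.const_mul (2 * π)).mul (hk.const_sub 1))
  have hlimit : (a * (2 * π * 2⁻¹ * (1 - 2⁻¹)))⁻¹ = 2 / (π * a) := by
    field_simp
    norm_num
  have h := (hvariance.inv₀ (mul_pos ha (mul_pos (by positivity) (by norm_num))).ne').sqrt
  rw [hlimit] at h
  refine h.congr' ?_
  filter_upwards [hT.eventually_gt_atTop 0, (hT.num ha hn).eventually_gt_atTop 0] with i hTi hni
  rw [← Real.sqrt_mul hTi.le]
  congr 1
  field_simp

theorem tendsto_sqrt_mul_choose_div_two_pow {n k : ι → ℕ} {a α : ℝ} (hT : Tendsto T l atTop)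
    (ha : 0 < a) (hn : Tendsto (fun i => n i / T i) l (𝓝 a))
    (hk : Tendsto (fun i => (2 * k i - n i) / √(T i)) l (𝓝 α)) :
    Tendsto (fun i => √(T i) * (n i).choose (k i) / 2 ^ n i) l
      (𝓝 (√(2 / (π * a)) * Real.exp (-(α ^ 2 / (2 * a))))) := by
  have hn_top : Tendsto (fun i => (n i : ℝ)) l atTop := hT.num ha hn
  have hp := tendsto_natCast_div_two_inv hT ha hn hk
  have hk_top : Tendsto k l atTop :=
    tendsto_natCast_atTop_iff.1 (hn_top.num (by norm_num : (0 : ℝ) < 2⁻¹) hp)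
  have hchoose := isEquivalent_choose_binEntropy hk_top
    (tendsto_natSub_atTop_of_tendsto_div hn_top (by norm_num) hp)
  have hgauss := (tendsto_sqrt_mul_sqrt_div hT ha hn hp).mul
    (tendsto_mul_binEntropy_sub_log_two hT ha hn hk).rexp
  have hscaled := (IsEquivalent.refl (u := fun i => √(T i) / 2 ^ n i)).mul hchoose
  refine (hscaled.symm.tendsto_nhds (hgauss.congr fun i => ?_)).congr fun i => ?_
  · rw [mul_sub _ _ (Real.log 2), Real.exp_sub, Real.exp_nat_mul (Real.log 2),
      Real.exp_log two_pos, Pi.mul_apply]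
    ring
  · rw [Pi.mul_apply]
    ring

theorem tendsto_sqrt_mul_choose_mul_choose_div_choose {m n p q r : ι → ℕ} {a b α β γ : ℝ}
    (hT : Tendsto T l atTop) (ha : 0 < a) (hb : 0 < b)
    (hm : Tendsto (fun i => m i / T i) l (𝓝 a)) (hn : Tendsto (fun i => n i / T i) l (𝓝 b))
    (hp : Tendsto (fun i => (2 * p i - m i) / √(T i)) l (𝓝 α))
    (hq : Tendsto (fun i => (2 * q i - n i) / √(T i)) l (𝓝 β))
    (hr : Tendsto (fun i => (2 * r i - (m i + n i)) / √(T i)) l (𝓝 γ)) :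
    Tendsto (fun i => √(T i) *
        ((m i).choose (p i) * (n i).choose (q i) / (m i + n i).choose (r i))) l
      (𝓝 (√(2 * (a + b) / (π * a * b)) *
        Real.exp (-(α ^ 2 / a + β ^ 2 / b - γ ^ 2 / (a + b)) / 2))) := by
  have hmn : Tendsto (fun i => ((m i + n i : ℕ) : ℝ) / T i) l (𝓝 (a + b)) :=
    (hm.add hn).congr fun i => by push_cast; ring
  have h := ((tendsto_sqrt_mul_choose_div_two_pow hT ha hm hp).mul
    (tendsto_sqrt_mul_choose_div_two_pow hT hb hn hq)).div
    (tendsto_sqrt_mul_choose_div_two_pow (k := r) (α := γ) hT (add_pos ha hb) hmn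
      (by simpa only [Nat.cast_add] using hr)) (by positivity)
  have hsqrt : √(2 * (a + b) / (π * a * b)) =
      √(2 / (π * a)) * √(2 / (π * b)) / √(2 / (π * (a + b))) := by
    rw [← Real.sqrt_mul (by positivity), ← Real.sqrt_div (by positivity)]
    congr 1
    field_simp
  have hexp : Real.exp (-(α ^ 2 / a + β ^ 2 / b - γ ^ 2 / (a + b)) / 2) =
      Real.exp (-(α ^ 2 / (2 * a))) * Real.exp (-(β ^ 2 / (2 * b))) /
        Real.exp (-(γ ^ 2 / (2 * (a + b)))) := by
    rw [← Real.exp_add, ← Real.exp_sub]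
    congr 1
    field_simp
    ring
  rw [hsqrt, hexp, div_mul_div_comm, mul_mul_mul_comm]
  refine h.congr fun i => ?_
  rw [Pi.div_apply, pow_add]
  field_simp

end LocalLimit

section Rounding

variable {ι : Type*} {l : Filter ι} {T : ι → ℝ} {t u x : ι → ℤ} {a b ξ : ℝ}

lemma eventually_nonneg_of_tendsto_intCast_div (hT : Tendsto T l atTop) (ha : 0 < a)
    (ht : Tendsto (fun i => t i / T i) l (𝓝 a)) : ∀ᶠ i in l, 0 ≤ t i := by
  filter_upwards [(hT.num ha ht).eventually_ge_atTop 0] with i hti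
  exact_mod_cast hti

lemma eventually_toNat_add_toNat (hT : Tendsto T l atTop) (ha : 0 < a) (hb : 0 < b)
    (ht : Tendsto (fun i => t i / T i) l (𝓝 a)) (hu : Tendsto (fun i => u i / T i) l (𝓝 b)) :
    ∀ᶠ i in l, (t i).toNat + (u i).toNat = (t i + u i).toNat := by
  filter_upwards [eventually_nonneg_of_tendsto_intCast_div hT ha ht,
    eventually_nonneg_of_tendsto_intCast_div hT hb hu] with i hti hui
  exact (Int.toNat_add hti hui).symm

lemma tendsto_toNat_div (hT : Tendsto T l atTop) (ha : 0 < a)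
    (ht : Tendsto (fun i => t i / T i) l (𝓝 a)) :
    Tendsto (fun i => (t i).toNat / T i) l (𝓝 a) := by
  refine ht.congr' ?_
  filter_upwards [eventually_nonneg_of_tendsto_intCast_div hT ha ht] with i hti
  have hcast : ((t i).toNat : ℝ) = t i := by exact_mod_cast Int.toNat_of_nonneg hti
  rw [hcast]

lemma tendsto_two_mul_toNat_half_sub_div_sqrt (hT : Tendsto T l atTop) (ha : 0 < a)
    (ht : Tendsto (fun i => t i / T i) l (𝓝 a)) (hx : Tendsto (fun i => x i / √(T i)) l (𝓝 ξ)) :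
    Tendsto (fun i => (2 * ((t i + x i) / 2).toNat - (t i).toNat) / √(T i)) l (𝓝 ξ) := by
  have hsqrt : Tendsto (fun i => √(T i)) l atTop := Real.tendsto_sqrt_atTop.comp hT
  -- Rounding `(t + x) / 2` down costs at most one unit, which is negligible on the scale `√T`.
  have hround : Tendsto (fun i => (((t i + x i) % 2 : ℤ) : ℝ) / √(T i)) l (𝓝 0) := by
    refine tendsto_bdd_div_atTop_nhds_zero (b := 0) (B := 1) ?_ ?_ hsqrt
    · exact .of_forall fun i => by exact_mod_cast Int.emod_nonneg _ two_ne_zero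
    · exact .of_forall fun i => by exact_mod_cast (by omega : (t i + x i) % 2 ≤ 1)
  have hsum : Tendsto (fun i => ((t i + x i : ℤ) : ℝ) / T i) l (𝓝 a) := by
    have h := ht.add (hx.div_atTop hsqrt)
    rw [add_zero] at h
    refine h.congr' ?_
    filter_upwards [hT.eventually_gt_atTop 0] with i hTi
    rw [div_div, Real.mul_self_sqrt hTi.le, Int.cast_add, add_div]
  have h := hx.sub hround
  rw [sub_zero] at h
  refine h.congr' ?_
  filter_upwards [eventually_nonneg_of_tendsto_intCast_div hT ha ht,
    eventually_nonneg_of_tendsto_intCast_div hT ha hsum] with i hti hsumi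
  have hcast : (2 * ((t i + x i) / 2).toNat - (t i).toNat : ℝ) =
      x i - ((t i + x i) % 2 : ℤ) := by
    exact_mod_cast (by omega : (2 * ((t i + x i) / 2).toNat - (t i).toNat : ℤ) =
      x i - (t i + x i) % 2)
  rw [hcast, sub_div]

end Rounding

lemma bridge_density_eq {s ξ : ℝ} (hs0 : 0 < s) (hs2 : s < 2) :
    √(2 * (s + (2 - s)) / (π * s * (2 - s))) *
        Real.exp (-(ξ ^ 2 / s + ξ ^ 2 / (2 - s) - 0 ^ 2 / (s + (2 - s))) / 2) / 2 =
      1 / √(π * s * (2 - s)) * Real.exp (-ξ ^ 2 / (s * (2 - s))) := by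
  have hs2' : 0 < 2 - s := sub_pos.2 hs2
  have hsqrt : √(2 * (s + (2 - s)) / (π * s * (2 - s))) = 2 / √(π * s * (2 - s)) := by
    rw [Real.sqrt_div (by positivity), show 2 * (s + (2 - s)) = 2 ^ 2 by ring,
      Real.sqrt_sq zero_le_two]
  have hexponent : -(ξ ^ 2 / s + ξ ^ 2 / (2 - s) - 0 ^ 2 / (s + (2 - s))) / 2 =
      -ξ ^ 2 / (s * (2 - s)) := by
    field_simp
    ring
  rw [hsqrt, hexponent]
  ring

theorem classical_excursion_to_brownian_bridge_general {ι : Type*} {l : Filter ι} {s ξ : ℝ}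
    (hs0 : 0 < s) (hs2 : s < 2) {T : ι → ℕ} (hT : Tendsto (fun i => (T i : ℝ)) l atTop)
    {t : ι → ℤ} (hts : Tendsto (fun i => (t i : ℝ) / (T i : ℝ)) l (𝓝 s))
    {x : ι → ℤ} (hxs : Tendsto (fun i => (x i : ℝ) / √(T i : ℝ)) l (𝓝 ξ)) :
    Tendsto (fun i => √(T i : ℝ) / 2 *
        ((Nat.choose (t i).toNat ((t i + x i) / 2).toNat *
            Nat.choose (2 * (T i : ℤ) - t i).toNat ((2 * (T i : ℤ) - t i + x i) / 2).toNat : ℝ) /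
          (Nat.choose (2 * T i) (T i) : ℝ)))
      l (𝓝 (1 / √(π * s * (2 - s)) * Real.exp (-ξ ^ 2 / (s * (2 - s))))) := by
  have hs2' : 0 < 2 - s := sub_pos.2 hs2
  have hrest : Tendsto (fun i => ((2 * (T i : ℤ) - t i : ℤ) : ℝ) / T i) l (𝓝 (2 - s)) := by
    refine (hts.const_sub 2).congr' ?_
    filter_upwards [hT.eventually_gt_atTop 0] with i hTi
    push_cast
    field_simp
  have hlength : ∀ᶠ i in l, (t i).toNat + (2 * (T i : ℤ) - t i).toNat = 2 * T i :=
    (eventually_toNat_add_toNat hT hs0 hs2' hts hrest).mono fun i hi => by omega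
  have hcenter : Tendsto (fun i => (2 * (T i : ℝ) -
      ((t i).toNat + (2 * (T i : ℤ) - t i).toNat)) / √(T i : ℝ)) l (𝓝 0) := by
    refine tendsto_const_nhds.congr' ?_
    filter_upwards [hlength] with i hi
    rw [← Nat.cast_add, hi, Nat.cast_mul, Nat.cast_ofNat, sub_self, zero_div]
  have h := (tendsto_sqrt_mul_choose_mul_choose_div_choose hT hs0 hs2'
    (tendsto_toNat_div hT hs0 hts) (tendsto_toNat_div hT hs2' hrest)
    (tendsto_two_mul_toNat_half_sub_div_sqrt hT hs0 hts hxs)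
    (tendsto_two_mul_toNat_half_sub_div_sqrt hT hs2' hrest hxs) hcenter).div_const 2
  rw [bridge_density_eq hs0 hs2] at h
  refine h.congr' ?_
  filter_upwards [hlength] with i hi
  rw [hi]
  ring

/-- Convergence of the single-time distribution of the classical random-walk excursion
to the probability density of the Brownian bridge of duration `2`. -/
theorem classical_excursion_to_brownian_bridge (s ξ : ℝ) (hs0 : 0 < s) (hs2 : s < 2)
    (T : ℕ → ℕ) (hTpos : ∀ j, 0 < T j)
    (hT : Tendsto (fun j => (T j : ℝ)) atTop atTop)
    (t : ℕ → ℤ) (ht0 : ∀ j, 0 ≤ t j ∧ t j ≤ 2 * (T j : ℤ))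
    (hts : Tendsto (fun j => (t j : ℝ) / (T j : ℝ)) atTop (nhds s))
    (x : ℕ → ℤ) (hpar : ∀ j, Even (t j + x j))
    (hxs : Tendsto (fun j => (x j : ℝ) / Real.sqrt (T j : ℝ)) atTop (nhds ξ)) :
    Tendsto (fun j => Real.sqrt (T j : ℝ) / 2 *
        ((Nat.choose (t j).toNat ((t j + x j) / 2).toNat *
            Nat.choose (2 * (T j : ℤ) - t j).toNat ((2 * (T j : ℤ) - t j + x j) / 2).toNat : ℝ) /
          (Nat.choose (2 * T j) (T j) : ℝ)))
      atTop
      (nhds (1 / Real.sqrt (π * s * (2 - s)) * Real.exp (-ξ ^ 2 / (s * (2 - s))))) :=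
  classical_excursion_to_brownian_bridge_general hs0 hs2 hT hts hxs
end

section
/- For every γ ∈ (0, 3), the limit lim_{T→∞} [−(1/T) · ∑_{n=1}^{⌊γT⌋} log sin(nπ/(3T))] = γ·log 2 + (3/(2π)) · ∑_{n=1}^∞ sin(2γnπ/3)/n² holds, where T ranges over positive integers; equivalently, the limit equals −(3/π)·∫_0^{γπ/3} log sin u du. -/
open scoped Real
open Filter

/-! Taking real parts in the Taylor series of `-log (1 - z)` at `z = r * exp (t * I)` and
integrating in `t` gives, for `|r| < 1`,
`∑ sin (n * θ) / n ^ 2 * r ^ n = -∫ t in 0..θ, log ‖1 - r * exp (t * I)‖`.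
As `r → 1`, Abel's limit theorem applies on the left. On the right `log 2 - log |sin t|` dominates,
because `|sin t|` is the distance from `1` to the line `ℝ * exp (t * I)`, and the limiting integrand
is `log |2 * sin (t / 2)|`. As `Real.log x = log |x|`, the term `log |sin t|` is written
`Real.log (Real.sin t)`.

The logarithmic sums are right-endpoint Riemann sums of `log ∘ sin`, that is, integrals of step
functions. Unimodality of the sine dominates them although `log ∘ sin` is unbounded near `0`. -/

open MeasureTheory Set
open scoped Topology

section RiemannSum

theorem tendsto_indicator_comp_natCeil_div {E : Type*} [TopologicalSpace E] [Zero E]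
    {f : ℝ → E} {a u : ℝ} (hu : u ∈ Ico 0 a) (hf : ContinuousAt f u) :
    Tendsto (fun x : ℝ ↦ {u | u ≤ ⌊a * x⌋₊ / x}.indicator (fun u ↦ f (⌈u * x⌉₊ / x)) u)
      atTop (𝓝 (f u)) := by
  refine (hf.tendsto.comp (tendsto_nat_ceil_mul_div_atTop hu.1)).congr' ?_
  have u_lt_floor_div := (tendsto_nat_floor_mul_div_atTop (hu.1.trans hu.2.le)).eventually_const_lt
    hu.2
  filter_upwards [u_lt_floor_div] with x hux
  rw [indicator_of_mem (by exact hux.le), Function.comp_apply]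

variable {E : Type*} [NormedAddCommGroup E]

theorem norm_indicator_comp_natCeil_div_le {f : ℝ → E} {g : ℝ → ℝ} {a x u : ℝ} (hx : 0 < x)
    (hu : u ∈ Ioc 0 a) (hfg : ∀ v ∈ Icc u a, ‖f v‖ ≤ g u) :
    ‖{u | u ≤ ⌊a * x⌋₊ / x}.indicator (fun u ↦ f (⌈u * x⌉₊ / x)) u‖ ≤ g u := by
  rw [norm_indicator_eq_indicator_norm]
  refine indicator_apply_le' (fun hmem ↦ hfg _ ⟨?_, ?_⟩) fun _ ↦
    (norm_nonneg _).trans (hfg u ⟨le_rfl, hu.2⟩)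
  · exact (le_div_iff₀ hx).2 (Nat.le_ceil _)
  · have ceil_le_floor : ⌈u * x⌉₊ ≤ ⌊a * x⌋₊ := Nat.ceil_le.2 ((le_div_iff₀ hx).1 hmem)
    have ha : 0 ≤ a * x := mul_nonneg (hu.1.le.trans hu.2) hx.le
    exact (div_le_iff₀ hx).2 ((Nat.cast_le.2 ceil_le_floor).trans (Nat.floor_le ha))

variable [NormedSpace ℝ E] [CompleteSpace E]

theorem integral_comp_natCeil (g : ℕ → E) (N : ℕ) :
    ∫ u in (0 : ℝ)..N, g ⌈u⌉₊ = ∑ n ∈ Finset.Icc 1 N, g n := by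
  have const_on_cell (k : ℕ) :
      EqOn (fun _ ↦ g (k + 1)) (fun u : ℝ ↦ g ⌈u⌉₊) (uIoo (k : ℝ) (k + 1 : ℕ)) := by
    intro u hu
    rw [uIoo_of_le (by simp)] at hu
    have hceil : ⌈u⌉₊ = k + 1 := by
      rw [Nat.ceil_eq_iff k.succ_ne_zero]
      exact ⟨by simpa using hu.1, hu.2.le⟩
    simp only [hceil]
  have cell_integral (k : ℕ) : ∫ u in (k : ℝ)..(k + 1 : ℕ), g ⌈u⌉₊ = g (k + 1) := by
    rw [← intervalIntegral.integral_congr_uIoo (const_on_cell k)]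
    simp
  calc ∫ u in (0 : ℝ)..N, g ⌈u⌉₊
      = ∑ k ∈ Finset.range N, ∫ u in (k : ℝ)..(k + 1 : ℕ), g ⌈u⌉₊ := by
        rw [intervalIntegral.sum_integral_adjacent_intervals (a := fun k : ℕ ↦ (k : ℝ))
          fun k _ ↦ intervalIntegrable_const.congr_uIoo (const_on_cell k), Nat.cast_zero]
    _ = ∑ k ∈ Finset.range N, g (k + 1) := by simp only [cell_integral]
    _ = ∑ n ∈ Finset.Icc 1 N, g n := by
        rw [Finset.range_eq_Ico, Finset.sum_Ico_add' g 0 N 1, zero_add,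
          Finset.Ico_add_one_right_eq_Icc]

theorem integral_indicator_comp_natCeil_div (f : ℝ → E) {a x : ℝ} (ha : 0 ≤ a) (hx : 0 < x) :
    ∫ u in (0 : ℝ)..a, {u | u ≤ ⌊a * x⌋₊ / x}.indicator (fun u ↦ f (⌈u * x⌉₊ / x)) u =
      x⁻¹ • ∑ n ∈ Finset.Icc 1 ⌊a * x⌋₊, f (n / x) := by
  have floor_div_le : ⌊a * x⌋₊ / x ≤ a := (div_le_iff₀ hx).2 (Nat.floor_le (by positivity))
  rw [intervalIntegral.integral_indicator ⟨by positivity, floor_div_le⟩,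
    intervalIntegral.integral_comp_mul_right (fun v ↦ f (⌈v⌉₊ / x)) hx.ne', zero_mul,
    div_mul_cancel₀ _ hx.ne', integral_comp_natCeil fun n ↦ f (n / x)]

theorem tendsto_riemannSum_of_dominated {f : ℝ → E} {g : ℝ → ℝ} {a : ℝ} (ha : 0 ≤ a)
    (hf : ContinuousOn f (Ioo 0 a)) (hg : IntervalIntegrable g volume 0 a)
    (hfg : ∀ u ∈ Ioc 0 a, ∀ v ∈ Icc u a, ‖f v‖ ≤ g u) :
    Tendsto (fun x : ℝ ↦ x⁻¹ • ∑ n ∈ Finset.Icc 1 ⌊a * x⌋₊, f (n / x)) atTop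
      (𝓝 (∫ u in (0 : ℝ)..a, f u)) := by
  refine Tendsto.congr' (f₁ := fun x ↦
    ∫ u in (0 : ℝ)..a, {u | u ≤ ⌊a * x⌋₊ / x}.indicator (fun u ↦ f (⌈u * x⌉₊ / x)) u) ?_ ?_
  · filter_upwards [eventually_gt_atTop 0] with x hx
    exact integral_indicator_comp_natCeil_div f ha hx
  refine intervalIntegral.tendsto_integral_filter_of_dominated_convergence g ?_ ?_ hg ?_
  · refine Eventually.of_forall fun x ↦ StronglyMeasurable.aestronglyMeasurable ?_
    have samples_measurable : StronglyMeasurable fun n : ℕ ↦ f (n / x) := .of_discrete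
    exact (samples_measurable.comp_measurable (measurable_id.mul_const x).nat_ceil).indicator
      measurableSet_Iic
  · filter_upwards [eventually_gt_atTop 0] with x hx
    refine ae_of_all _ fun u hu ↦ ?_
    rw [uIoc_of_le ha] at hu
    exact norm_indicator_comp_natCeil_div_le hx hu (hfg u hu)
  · filter_upwards [Measure.ae_ne volume a] with u hne hu
    rw [uIoc_of_le ha] at hu
    have hlt : u < a := hu.2.lt_of_ne hne
    exact tendsto_indicator_comp_natCeil_div ⟨hu.1.le, hlt⟩
      (hf.continuousAt (Ioo_mem_nhds hu.1 hlt))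

end RiemannSum

theorem sin_mul_sin_le_sin {u v a : ℝ} (hu : 0 ≤ u) (huv : u ≤ v) (hva : v ≤ a) (ha : a ≤ π) :
    Real.sin u * Real.sin a ≤ Real.sin v := by
  have hua : u ≤ a := huv.trans hva
  have sin_u_nonneg := Real.sin_nonneg_of_nonneg_of_le_pi hu (hua.trans ha)
  have sin_a_nonneg := Real.sin_nonneg_of_nonneg_of_le_pi (hu.trans hua) ha
  calc Real.sin u * Real.sin a
      ≤ min (Real.sin u) (Real.sin a) :=
        le_min (mul_le_of_le_one_right sin_u_nonneg (Real.sin_le_one a))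
          (mul_le_of_le_one_left sin_a_nonneg (Real.sin_le_one u))
    _ ≤ Real.sin v := strictConcaveOn_sin_Icc.concaveOn.min_le_of_mem_Icc
        ⟨hu, hua.trans ha⟩ ⟨hu.trans hua, ha⟩ ⟨huv, hva⟩

theorem tendsto_riemannSum_log_sin {a : ℝ} (ha : 0 ≤ a) (ha' : a < π) :
    Tendsto (fun x : ℝ ↦ x⁻¹ * ∑ n ∈ Finset.Icc 1 ⌊a * x⌋₊, Real.log (Real.sin (n / x))) atTop
      (𝓝 (∫ u in (0 : ℝ)..a, Real.log (Real.sin u))) := by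
  have sin_pos {u : ℝ} (hu : 0 < u) (hua : u ≤ a) : 0 < Real.sin u :=
    Real.sin_pos_of_pos_of_lt_pi hu (hua.trans_lt ha')
  refine tendsto_riemannSum_of_dominated
    (g := fun u ↦ -Real.log (Real.sin u) - Real.log (Real.sin a)) ha
    (Real.continuous_sin.continuousOn.log fun u hu ↦ (sin_pos hu.1 hu.2.le).ne')
    (intervalIntegrable_log_sin.neg.sub intervalIntegrable_const) ?_
  rintro u ⟨hu, hua⟩ v ⟨huv, hva⟩
  have sin_u_pos := sin_pos hu hua
  have sin_a_pos := sin_pos (hu.trans_le hua) le_rfl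
  have sin_v_pos := sin_pos (hu.trans_le huv) hva
  calc ‖Real.log (Real.sin v)‖ = -Real.log (Real.sin v) :=
        Real.norm_of_nonpos (Real.log_nonpos sin_v_pos.le (Real.sin_le_one v))
    _ ≤ -Real.log (Real.sin u * Real.sin a) := neg_le_neg <|
        Real.log_le_log (by positivity) (sin_mul_sin_le_sin hu.le huv hva ha'.le)
    _ = -Real.log (Real.sin u) - Real.log (Real.sin a) := by
        rw [Real.log_mul sin_u_pos.ne' sin_a_pos.ne', neg_add']

theorem hasSum_pow_mul_cos_div {r : ℝ} (hr : |r| < 1) (θ : ℝ) :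
    HasSum (fun n : ℕ ↦ r ^ n * Real.cos (n * θ) / n)
      (-Real.log ‖1 - r * Complex.exp (θ * Complex.I)‖) := by
  have hz : ‖(r : ℂ) * Complex.exp (θ * Complex.I)‖ < 1 := by
    simpa [Complex.norm_exp_ofReal_mul_I] using hr
  have re_term (n : ℕ) : (((r : ℂ) * Complex.exp (θ * Complex.I)) ^ n / n).re =
      r ^ n * Real.cos (n * θ) / n := by
    have arg_mul : (n : ℂ) * (θ * Complex.I) = ((n * θ : ℝ) : ℂ) * Complex.I := by
      push_cast; ring
    rw [mul_pow, ← Complex.exp_nat_mul, Complex.div_natCast_re, ← Complex.ofReal_pow,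
      Complex.re_ofReal_mul, arg_mul, Complex.exp_ofReal_mul_I_re]
  simpa only [re_term, Complex.neg_re, Complex.log_re] using
    Complex.hasSum_re (Complex.hasSum_taylorSeries_neg_log hz)

theorem integral_cos_natCast_mul_div (n : ℕ) (θ : ℝ) :
    ∫ t in (0 : ℝ)..θ, Real.cos (n * t) / n = Real.sin (n * θ) / n ^ 2 := by
  rcases eq_or_ne n 0 with rfl | hn
  · simp
  · rw [intervalIntegral.integral_div,
      intervalIntegral.integral_comp_mul_left Real.cos (Nat.cast_ne_zero.2 hn), integral_cos,
      mul_zero, Real.sin_zero, sub_zero, smul_eq_mul]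
    field_simp

theorem hasSum_sin_div_sq_mul_pow {r : ℝ} (hr : |r| < 1) (θ : ℝ) :
    HasSum (fun n : ℕ ↦ Real.sin (n * θ) / n ^ 2 * r ^ n)
      (∫ t in (0 : ℝ)..θ, -Real.log ‖1 - r * Complex.exp (t * Complex.I)‖) := by
  have integral_term (n : ℕ) :
      ∫ t in (0 : ℝ)..θ, r ^ n * Real.cos (n * t) / n = Real.sin (n * θ) / n ^ 2 * r ^ n := by
    simp only [mul_div_assoc, intervalIntegral.integral_const_mul, integral_cos_natCast_mul_div]
    ring
  have term_le (n : ℕ) (t : ℝ) : ‖r ^ n * Real.cos (n * t) / n‖ ≤ |r| ^ n := by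
    rcases eq_or_ne n 0 with rfl | hn
    · simp
    have one_le : (1 : ℝ) ≤ n := Nat.one_le_cast.2 (Nat.one_le_iff_ne_zero.2 hn)
    rw [norm_div, norm_mul, norm_pow, Real.norm_natCast]
    exact div_le_of_le_mul₀ (by positivity) (by positivity)
      (mul_le_mul_of_nonneg_left ((Real.abs_cos_le_one _).trans one_le) (by positivity))
  simp only [← integral_term]
  refine intervalIntegral.hasSum_integral_of_dominated_convergence (fun n _ ↦ |r| ^ n)
    (fun n ↦ Continuous.aestronglyMeasurable (by fun_prop))
    (fun n ↦ ae_of_all _ fun t _ ↦ term_le n t)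
    (ae_of_all _ fun _ _ ↦ summable_geometric_of_lt_one (abs_nonneg r) hr)
    intervalIntegrable_const
    (ae_of_all _ fun t _ ↦ hasSum_pow_mul_cos_div hr t)

theorem ae_sin_ne_zero : ∀ᵐ t : ℝ, Real.sin t ≠ 0 := by
  have zeros_countable : {t : ℝ | Real.sin t = 0}.Countable :=
    (countable_range fun n : ℤ ↦ (n * π : ℝ)).mono fun _ ↦ Real.sin_eq_zero_iff.1
  exact zeros_countable.ae_notMem volume

theorem abs_sin_le_norm_one_sub_mul_exp (r t : ℝ) :
    |Real.sin t| ≤ ‖1 - r * Complex.exp (t * Complex.I)‖ := by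
  have rotate : Complex.exp ((-t : ℝ) * Complex.I) * (1 - r * Complex.exp (t * Complex.I)) =
      Complex.exp ((-t : ℝ) * Complex.I) - r := by
    rw [mul_sub, mul_one, mul_left_comm, ← Complex.exp_add]
    simp
  calc |Real.sin t|
      = |(Complex.exp ((-t : ℝ) * Complex.I) - r).im| := by
        rw [Complex.sub_im, Complex.exp_ofReal_mul_I_im, Complex.ofReal_im, sub_zero, Real.sin_neg,
          abs_neg]
    _ ≤ ‖Complex.exp ((-t : ℝ) * Complex.I) - r‖ := Complex.abs_im_le_norm _
    _ = ‖1 - r * Complex.exp (t * Complex.I)‖ := by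
        rw [← rotate, norm_mul, Complex.norm_exp_ofReal_mul_I, one_mul]

theorem norm_one_sub_mul_exp_le_two {r : ℝ} (hr : |r| ≤ 1) (t : ℝ) :
    ‖1 - r * Complex.exp (t * Complex.I)‖ ≤ 2 := by
  calc ‖1 - r * Complex.exp (t * Complex.I)‖
      ≤ ‖(1 : ℂ)‖ + ‖r * Complex.exp (t * Complex.I)‖ := norm_sub_le _ _
    _ = 1 + |r| := by simp [Complex.norm_exp_ofReal_mul_I]
    _ ≤ 2 := by linarith

theorem abs_log_norm_one_sub_mul_exp_le {r t : ℝ} (hr : |r| ≤ 1) (ht : Real.sin t ≠ 0) :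
    |Real.log ‖1 - r * Complex.exp (t * Complex.I)‖| ≤ Real.log 2 - Real.log (Real.sin t) := by
  have abs_sin_pos : 0 < |Real.sin t| := abs_pos.2 ht
  have lower := Real.log_le_log abs_sin_pos (abs_sin_le_norm_one_sub_mul_exp r t)
  have upper := Real.log_le_log (abs_sin_pos.trans_le (abs_sin_le_norm_one_sub_mul_exp r t))
    (norm_one_sub_mul_exp_le_two hr t)
  have log_sin_nonpos := Real.log_nonpos (abs_nonneg _) (Real.abs_sin_le_one t)
  have log_two_nonneg : 0 ≤ Real.log 2 := Real.log_nonneg one_le_two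
  rw [Real.log_abs] at lower log_sin_nonpos
  exact abs_le.2 ⟨by linarith, by linarith⟩

theorem tendsto_integral_log_norm_one_sub_mul_exp (θ : ℝ) :
    Tendsto (fun r : ℝ ↦ ∫ t in (0 : ℝ)..θ, -Real.log ‖1 - r * Complex.exp (t * Complex.I)‖)
      (𝓝[<] 1) (𝓝 (∫ t in (0 : ℝ)..θ, -Real.log ‖1 - Complex.exp (t * Complex.I)‖)) := by
  refine intervalIntegral.tendsto_integral_filter_of_dominated_convergence
    (fun t ↦ Real.log 2 - Real.log (Real.sin t)) ?_ ?_
    (intervalIntegrable_const.sub intervalIntegrable_log_sin) ?_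
  · exact Eventually.of_forall fun r ↦ Measurable.aestronglyMeasurable (by fun_prop)
  · filter_upwards [Ioo_mem_nhdsLT (neg_one_lt_zero.trans one_pos)] with r hr
    filter_upwards [ae_sin_ne_zero] with t ht _
    rw [norm_neg]
    exact abs_log_norm_one_sub_mul_exp_le (abs_le.2 ⟨hr.1.le, hr.2.le⟩) ht
  · filter_upwards [ae_sin_ne_zero] with t ht _
    have norm_ne_zero : ‖1 - ((1 : ℝ) : ℂ) * Complex.exp (t * Complex.I)‖ ≠ 0 :=
      ((abs_pos.2 ht).trans_le (abs_sin_le_norm_one_sub_mul_exp 1 t)).ne'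
    have cont : ContinuousAt (fun r : ℝ ↦ -Real.log ‖1 - r * Complex.exp (t * Complex.I)‖) 1 :=
      ContinuousAt.neg (ContinuousAt.log (f := fun r : ℝ ↦ ‖1 - r * Complex.exp (t * Complex.I)‖)
        (by fun_prop) norm_ne_zero)
    simpa only [Complex.ofReal_one, one_mul] using cont.tendsto.mono_left nhdsWithin_le_nhds

theorem summable_sin_div_sq (θ : ℝ) : Summable fun n : ℕ ↦ Real.sin (n * θ) / (n : ℝ) ^ 2 := by
  refine (Real.summable_one_div_nat_pow.2 one_lt_two).of_norm_bounded fun n ↦ ?_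
  rw [norm_div, norm_pow, Real.norm_natCast]
  gcongr
  exact Real.abs_sin_le_one _

theorem hasSum_sin_div_sq (θ : ℝ) :
    HasSum (fun n : ℕ ↦ Real.sin (n * θ) / (n : ℝ) ^ 2)
      (-∫ t in (0 : ℝ)..θ, Real.log ‖1 - Complex.exp (t * Complex.I)‖) := by
  have abel := Real.tendsto_tsum_powerSeries_nhdsWithin_lt
    (summable_sin_div_sq θ).hasSum.tendsto_sum_nat
  have tsum_eq_integral : ∀ᶠ r : ℝ in 𝓝[<] 1,
      ∑' n : ℕ, Real.sin (n * θ) / (n : ℝ) ^ 2 * r ^ n =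
        ∫ t in (0 : ℝ)..θ, -Real.log ‖1 - r * Complex.exp (t * Complex.I)‖ := by
    filter_upwards [Ioo_mem_nhdsLT (neg_one_lt_zero.trans one_pos)] with r hr
    exact (hasSum_sin_div_sq_mul_pow (abs_lt.2 hr) θ).tsum_eq
  have tsum_eq := tendsto_nhds_unique (abel.congr' tsum_eq_integral)
    (tendsto_integral_log_norm_one_sub_mul_exp θ)
  rw [← intervalIntegral.integral_neg, ← tsum_eq]
  exact (summable_sin_div_sq θ).hasSum

theorem integral_log_norm_one_sub_exp (x : ℝ) :
    ∫ t in (0 : ℝ)..2 * x, Real.log ‖1 - Complex.exp (t * Complex.I)‖ =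
      2 * (x * Real.log 2 + ∫ u in (0 : ℝ)..x, Real.log (Real.sin u)) := by
  have norm_eq (u : ℝ) : ‖1 - Complex.exp ((2 * u : ℝ) * Complex.I)‖ = |2 * Real.sin u| := by
    rw [norm_sub_rev, mul_comm _ Complex.I, Complex.norm_exp_I_mul_ofReal_sub_one,
      mul_div_cancel_left₀ u two_ne_zero, Real.norm_eq_abs]
  have log_split : ∀ᵐ u : ℝ, u ∈ uIoc 0 x →
      Real.log ‖1 - Complex.exp ((2 * u : ℝ) * Complex.I)‖ =
        Real.log 2 + Real.log (Real.sin u) := by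
    filter_upwards [ae_sin_ne_zero] with u hu _
    rw [norm_eq, Real.log_abs, Real.log_mul two_ne_zero hu]
  calc ∫ t in (0 : ℝ)..2 * x, Real.log ‖1 - Complex.exp (t * Complex.I)‖
      = 2 * ∫ u in (0 : ℝ)..x, Real.log ‖1 - Complex.exp ((2 * u : ℝ) * Complex.I)‖ := by
        rw [intervalIntegral.mul_integral_comp_mul_left
          (f := fun t : ℝ ↦ Real.log ‖1 - Complex.exp (t * Complex.I)‖), mul_zero]
    _ = 2 * ∫ u in (0 : ℝ)..x, (Real.log 2 + Real.log (Real.sin u)) := by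
        rw [intervalIntegral.integral_congr_ae log_split]
    _ = 2 * (x * Real.log 2 + ∫ u in (0 : ℝ)..x, Real.log (Real.sin u)) := by
        rw [intervalIntegral.integral_add (g := fun u ↦ Real.log (Real.sin u))
          intervalIntegrable_const intervalIntegrable_log_sin,
          intervalIntegral.integral_const, sub_zero, smul_eq_mul]

theorem tsum_sin_two_mul_div_sq (x : ℝ) :
    ∑' n : ℕ, Real.sin (2 * x * (n + 1)) / ((n : ℝ) + 1) ^ 2 =
      -2 * (x * Real.log 2 + ∫ u in (0 : ℝ)..x, Real.log (Real.sin u)) := by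
  have shifted := (hasSum_nat_add_iff' 1).2 (hasSum_sin_div_sq (2 * x))
  rw [integral_log_norm_one_sub_exp] at shifted
  simpa [mul_comm] using shifted.tsum_eq

theorem mul_log_two_add_tsum_sin_eq_integral_log_sin (γ : ℝ) :
    γ * Real.log 2 +
        3 / (2 * π) * (∑' n : ℕ, Real.sin (2 * γ * ((n : ℝ) + 1) * π / 3) / ((n : ℝ) + 1) ^ 2)
      = -(3 / π) * ∫ u in (0 : ℝ)..(γ * π / 3), Real.log (Real.sin u) := by
  have angle (n : ℕ) : 2 * γ * ((n : ℝ) + 1) * π / 3 = 2 * (γ * π / 3) * (n + 1) := by ring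
  simp only [angle, tsum_sin_two_mul_div_sq]
  field_simp
  ring

theorem log_sin_product_asymptotics_general (γ : ℝ) (h0 : 0 ≤ γ) (h3 : γ < 3) :
    Tendsto (fun T : ℝ ↦ -(1 / T) *
        ∑ n ∈ Finset.Icc 1 ⌊γ * T⌋₊, Real.log (Real.sin ((n : ℝ) * π / (3 * T))))
      atTop
      (𝓝 (γ * Real.log 2 +
        3 / (2 * π) * ∑' n : ℕ, Real.sin (2 * γ * ((n : ℝ) + 1) * π / 3) / ((n : ℝ) + 1) ^ 2)) ∧
    γ * Real.log 2 +
        3 / (2 * π) * (∑' n : ℕ, Real.sin (2 * γ * ((n : ℝ) + 1) * π / 3) / ((n : ℝ) + 1) ^ 2)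
      = -(3 / π) * ∫ u in (0 : ℝ)..(γ * π / 3), Real.log (Real.sin u) := by
  refine ⟨?_, mul_log_two_add_tsum_sin_eq_integral_log_sin γ⟩
  rw [mul_log_two_add_tsum_sin_eq_integral_log_sin]
  have sums := tendsto_riemannSum_log_sin (a := γ * π / 3) (by positivity)
    (by nlinarith [Real.pi_pos])
  have mesh : Tendsto (fun T : ℝ ↦ 3 / π * T) atTop atTop :=
    tendsto_id.const_mul_atTop (by positivity)
  refine ((sums.comp mesh).const_mul (-(3 / π))).congr fun T ↦ ?_
  have count : γ * π / 3 * (3 / π * T) = γ * T := by field_simp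
  have point (n : ℕ) : (n : ℝ) / (3 / π * T) = n * π / (3 * T) := by field_simp
  have weight : -(3 / π) * (3 / π * T)⁻¹ = -(1 / T) := by field_simp
  simp only [Function.comp_apply, count, point]
  rw [← mul_assoc, weight]

/-- Asymptotic evaluation of `A_{2T}(γ) = ∏_{n=1}^{⌊γT⌋} sin(nπ/(3T))`:
`lim_{T→∞} [−(1/T)·∑_{n=1}^{⌊γT⌋} log sin(nπ/(3T))] = γ log 2 + (3/(2π)) ∑_{n≥1} sin(2γnπ/3)/n²`,
and this limit equals `−(3/π)·∫₀^{γπ/3} log sin u du`. -/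
theorem log_sin_product_asymptotics (γ : ℝ) (h0 : 0 < γ) (h3 : γ < 3) :
    Tendsto (fun T : ℕ => -(1 / (T : ℝ)) *
        ∑ n ∈ Finset.Icc 1 (Nat.floor (γ * (T : ℝ))), Real.log (Real.sin ((n : ℝ) * π / (3 * T))))
      atTop
      (nhds (γ * Real.log 2 +
        3 / (2 * π) * ∑' n : ℕ, Real.sin (2 * γ * ((n : ℝ) + 1) * π / 3) / ((n : ℝ) + 1) ^ 2)) ∧
    γ * Real.log 2 +
        3 / (2 * π) * (∑' n : ℕ, Real.sin (2 * γ * ((n : ℝ) + 1) * π / 3) / ((n : ℝ) + 1) ^ 2)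
      = -(3 / π) * ∫ u in (0 : ℝ)..(γ * π / 3), Real.log (Real.sin u) :=
  (log_sin_product_asymptotics_general γ h0.le h3).imp_left
    fun h ↦ h.comp tendsto_natCast_atTop_atTop
end

section
/- As (s,v) → (1,0), the rate function satisfies the Taylor expansion I(s,v) = (√3 π/36)·(s−1−3v)² − (√3 π³/5832)·[5(s−1)⁴ + 36v(s−1)³ − 162v²(s−1)² + 36v³(s−1) − 27v⁴] − (√3 π⁵/524880)·[29(s−1)⁶ + 198v(s−1)⁵ − 1485v²(s−1)⁴ + 660v³(s−1)³ − 1485v⁴(s−1)² + 198v⁵(s−1) − 99v⁶] + O(|s−1|⁸ + |v|⁸); that is, there exist C > 0 and δ > 0 such that the difference between I(s,v) and the displayed polynomial is bounded by C(|s−1|⁸ + |v|⁸) whenever |s−1| < δ and |v| < δ. -/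
open scoped Real

/-- The rate function `I(s,v)` in its integral representation. -/
noncomputable def rateI (s v : ℝ) : ℝ :=
  3 * (∫ φ in (0 : ℝ)..((1 - s - v) / 6),
        Real.log (Real.sin (π * (φ + 1 / 6)) / Real.sin (π * (1 / 6 - φ)))) +
  6 * (∫ φ in (0 : ℝ)..((1 - s + v) / 6),
        Real.log (Real.sin (π * (φ + 1 / 6)) / Real.sin (π * (1 / 6 - φ)))) +
  6 * (∫ φ in (0 : ℝ)..((1 - s) / 3),
        Real.log (Real.cos (π * (φ + 1 / 6)) / Real.cos (π * (1 / 6 - φ))))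

/-!
With `θ = πφ` each integrand is `log (sin (a + θ) / sin (a - θ))`, for `a = π / 6` and, since
`cos θ = sin (θ + π / 2)`, for `a = π / 6 + π / 2`. Its derivative
`cot (a + θ) + cot (a - θ) = 2 cot a / (1 - sin² θ / sin² a)` expands through
`sin² θ = θ² - θ⁴ / 3 + O(θ⁶)`, and two integrations raise the order of the error from 6 to 8.
-/

open Filter Topology Asymptotics

theorem sub_isBigO_sub_pow_succ_of_hasDerivAt {E : Type*} [NormedAddCommGroup E] [NormedSpace ℝ E]
    {f f' : ℝ → E} {a : ℝ} {n : ℕ} (hf : ∀ᶠ x in 𝓝 a, HasDerivAt f (f' x) x)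
    (hf' : f' =O[𝓝 a] fun x ↦ (x - a) ^ n) :
    (fun x ↦ f x - f a) =O[𝓝 a] fun x ↦ (x - a) ^ (n + 1) := by
  have hfderiv : fderiv ℝ f =O[𝓝 a] fun x ↦ ‖x - a‖ ^ (n : ℝ) := by
    refine IsBigO.trans (.of_norm_eventuallyLE ?_) (hf'.norm_norm.congr_right fun x ↦ ?_)
    · filter_upwards [hf] with x hx
      rw [← norm_deriv_eq_norm_fderiv, hx.deriv]
    · rw [norm_pow, Real.rpow_natCast]
  have hsub := sub_isBigO_norm_rpow_add_one_of_fderiv n.cast_nonneg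
    (hf.mono fun x hx ↦ hx.differentiableAt) hfderiv
  refine (hsub.congr_right fun x ↦ ?_).of_norm_right
  rw [norm_pow, ← Real.rpow_natCast, Nat.cast_succ]

theorem eventually_hasDerivAt_integral_of_continuousAt {E : Type*} [NormedAddCommGroup E]
    [NormedSpace ℝ E] [CompleteSpace E] {f : ℝ → E} {a : ℝ}
    (hf : ∀ᶠ x in 𝓝 a, ContinuousAt f x) :
    ∀ᶠ x in 𝓝 a, HasDerivAt (fun u ↦ ∫ t in a..u, f t) (f x) x := by
  obtain ⟨ε, hε, hball⟩ := Metric.eventually_nhds_iff_ball.mp hf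
  filter_upwards [Metric.ball_mem_nhds a hε] with x hx
  have huIcc : Set.uIcc a x ⊆ Metric.ball a ε :=
    ((convex_ball a ε).ordConnected).uIcc_subset (Metric.mem_ball_self hε) hx
  have hint : IntervalIntegrable f MeasureTheory.volume a x :=
    ContinuousOn.intervalIntegrable fun t ht ↦ (hball t (huIcc ht)).continuousWithinAt
  exact intervalIntegral.integral_hasDerivAt_right hint
    (ContinuousAt.stronglyMeasurableAtFilter Metric.isOpen_ball hball x hx) (hball x hx)

theorem inv_sub_isBigO_of_one_sub_mul_isBigO {α 𝕜 F : Type*} [NormedField 𝕜]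
    [SeminormedAddCommGroup F] {l : Filter α} {f g : α → 𝕜} {h : α → F} {c : 𝕜}
    (hf : Tendsto f l (𝓝 c)) (hc : c ≠ 0)
    (hfg : (fun x ↦ 1 - f x * g x) =O[l] h) : (fun x ↦ (f x)⁻¹ - g x) =O[l] h := by
  have hinv : (fun x ↦ (f x)⁻¹) =O[l] fun _ ↦ (1 : ℝ) := (hf.inv₀ hc).isBigO_one ℝ
  refine ((hinv.mul hfg.norm_right).congr' ?_ (.of_eq (by simp))).of_norm_right
  filter_upwards [hf.eventually_ne hc] with x hx
  rw [mul_sub, mul_one, inv_mul_cancel_left₀ hx]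

theorem comp_isBigO_norm_sub_pow {𝕜 E F G : Type*} [NontriviallyNormedField 𝕜]
    [NormedAddCommGroup E] [NormedSpace 𝕜 E] [NormedAddCommGroup F] [NormedSpace 𝕜 F] [Norm G]
    {f : F → G} {u : E → F} {p : E} {n : ℕ} (hf : f =O[𝓝 (u p)] fun x ↦ ‖x - u p‖ ^ n)
    (hu : DifferentiableAt 𝕜 u p) : (fun q ↦ f (u q)) =O[𝓝 p] fun q ↦ ‖q - p‖ ^ n :=
  (hf.comp_tendsto hu.continuousAt).trans (hu.isBigO_sub.norm_norm.pow n)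

theorem sin_sq_sub_isBigO :
    (fun x : ℝ ↦ Real.sin x ^ 2 - (x ^ 2 - x ^ 4 / 3)) =O[𝓝 0] fun x ↦ x ^ 6 := by
  have hsin : (fun x : ℝ ↦ Real.sin x - (x - x ^ 3 / 6)) =O[𝓝 0] fun x ↦ x ^ 5 := by
    refine .of_bound (1 / 100) ?_
    filter_upwards [Metric.closedBall_mem_nhds (0 : ℝ) one_pos] with x hx
    simpa [div_eq_inv_mul] using Real.sin_bound (mem_closedBall_zero_iff.mp hx)
  have hsum : (fun x : ℝ ↦ Real.sin x + (x - x ^ 3 / 6)) =O[𝓝 0] fun x ↦ x := by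
    have : DifferentiableAt ℝ (fun x : ℝ ↦ Real.sin x + (x - x ^ 3 / 6)) 0 := by fun_prop
    simpa using this.isBigO_sub
  have hpoly : (fun x : ℝ ↦ x ^ 6 / 36) =O[𝓝 0] fun x ↦ x ^ 6 := by
    simpa [div_eq_inv_mul] using (isBigO_refl (fun x : ℝ ↦ x ^ 6) (𝓝 0)).const_mul_left 36⁻¹
  refine ((hsin.mul hsum).congr_right fun x ↦ ?_).add hpoly |>.congr_left fun x ↦ ?_
  · ring
  · ring

section LogSinRatio

/-- The common form of the three integrands of the rate function, in the angle `x = πφ`. -/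
noncomputable def logSinRatio (a x : ℝ) : ℝ :=
  Real.log (Real.sin (a + x) / Real.sin (a - x))

/-- The Taylor polynomial of degree 6 at `0` of the primitive `x ↦ ∫ t in 0..x, logSinRatio a t`,
for `sin a ≠ 0`. -/
noncomputable def logSinRatioIntegralTaylor (a x : ℝ) : ℝ :=
  Real.cot a * (x ^ 2 + (Real.sin a ^ 2)⁻¹ * x ^ 4 / 6 +
    (((Real.sin a ^ 2)⁻¹) ^ 2 - (Real.sin a ^ 2)⁻¹ / 3) * x ^ 6 / 15)

variable {a : ℝ}

theorem sin_add_mul_sin_sub (a x : ℝ) :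
    Real.sin (a + x) * Real.sin (a - x) = Real.sin a ^ 2 - Real.sin x ^ 2 := by
  rw [Real.sin_add, Real.sin_sub]
  linear_combination Real.sin a ^ 2 * Real.cos_sq' x - Real.sin x ^ 2 * Real.cos_sq' a

theorem cot_add_add_cot_sub {x : ℝ} (ha : Real.sin a ≠ 0) (hadd : Real.sin (a + x) ≠ 0)
    (hsub : Real.sin (a - x) ≠ 0) :
    Real.cot (a + x) + Real.cot (a - x) =
      2 * Real.cot a * (1 - (Real.sin a ^ 2)⁻¹ * Real.sin x ^ 2)⁻¹ := by
  have hden : Real.sin a ^ 2 - Real.sin x ^ 2 ≠ 0 := by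
    rw [← sin_add_mul_sin_sub]
    exact mul_ne_zero hadd hsub
  calc Real.cot (a + x) + Real.cot (a - x)
      = Real.sin ((a + x) + (a - x)) / (Real.sin (a + x) * Real.sin (a - x)) := by
        rw [Real.cot_eq_cos_div_sin, Real.cot_eq_cos_div_sin, Real.sin_add (a + x)]
        field_simp
        ring
    _ = 2 * Real.sin a * Real.cos a / (Real.sin a ^ 2 - Real.sin x ^ 2) := by
        rw [sin_add_mul_sin_sub, ← Real.sin_two_mul]
        ring_nf
    _ = 2 * Real.cot a * (1 - (Real.sin a ^ 2)⁻¹ * Real.sin x ^ 2)⁻¹ := by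
        rw [Real.cot_eq_cos_div_sin]
        field_simp

theorem hasDerivAt_logSinRatio {x : ℝ} (hadd : Real.sin (a + x) ≠ 0)
    (hsub : Real.sin (a - x) ≠ 0) :
    HasDerivAt (logSinRatio a) (Real.cot (a + x) + Real.cot (a - x)) x := by
  have hratio := ((hasDerivAt_id x).const_add a).sin.div ((hasDerivAt_id x).const_sub a).sin hsub
  refine (hratio.log (div_ne_zero hadd hsub)).congr_deriv ?_
  simp only [id, Pi.div_apply, Real.cot_eq_cos_div_sin]
  field_simp
  ring

theorem eventually_hasDerivAt_logSinRatio (ha : Real.sin a ≠ 0) :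
    ∀ᶠ x in 𝓝 0, HasDerivAt (logSinRatio a)
      (2 * Real.cot a * (1 - (Real.sin a ^ 2)⁻¹ * Real.sin x ^ 2)⁻¹) x := by
  have hadd : ∀ᶠ x in 𝓝 0, Real.sin (a + x) ≠ 0 :=
    ContinuousAt.eventually_ne (by fun_prop) (by simpa using ha)
  have hsub : ∀ᶠ x in 𝓝 0, Real.sin (a - x) ≠ 0 :=
    ContinuousAt.eventually_ne (by fun_prop) (by simpa using ha)
  filter_upwards [hadd, hsub] with x hxadd hxsub
  exact cot_add_add_cot_sub ha hxadd hxsub ▸ hasDerivAt_logSinRatio hxadd hxsub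

theorem inv_one_sub_mul_sin_sq_sub_isBigO (c : ℝ) :
    (fun x ↦ (1 - c * Real.sin x ^ 2)⁻¹ - (1 + c * x ^ 2 + (c ^ 2 - c / 3) * x ^ 4))
      =O[𝓝 0] fun x ↦ x ^ 6 := by
  have hlim : Tendsto (fun x ↦ 1 - c * Real.sin x ^ 2) (𝓝 0) (𝓝 1) :=
    Continuous.tendsto' (by fun_prop) _ _ (by simp)
  have hbdd : (fun x : ℝ ↦ 1 + c * x ^ 2 + (c ^ 2 - c / 3) * x ^ 4) =O[𝓝 0] fun _ ↦ (1 : ℝ) :=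
    (ContinuousAt.tendsto (by fun_prop)).isBigO_one ℝ
  have htail : (fun x : ℝ ↦ (c ^ 3 - 2 * c ^ 2 / 3 - (c ^ 3 / 3 - c ^ 2 / 9) * x ^ 2) * x ^ 6)
      =O[𝓝 0] fun x ↦ x ^ 6 := by
    have : (fun x : ℝ ↦ c ^ 3 - 2 * c ^ 2 / 3 - (c ^ 3 / 3 - c ^ 2 / 9) * x ^ 2)
        =O[𝓝 0] fun _ ↦ (1 : ℝ) := (ContinuousAt.tendsto (by fun_prop)).isBigO_one ℝ
    simpa using this.mul (isBigO_refl (fun x : ℝ ↦ x ^ 6) (𝓝 0))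
  have hsin := (sin_sq_sub_isBigO.const_mul_left c).mul hbdd
  simp only [mul_one] at hsin
  refine inv_sub_isBigO_of_one_sub_mul_isBigO hlim one_ne_zero
    ((hsin.add htail).congr_left fun x ↦ ?_)
  ring

theorem logSinRatio_sub_isBigO (ha : Real.sin a ≠ 0) :
    (fun x ↦ logSinRatio a x - 2 * Real.cot a * (x + (Real.sin a ^ 2)⁻¹ * x ^ 3 / 3 +
      (((Real.sin a ^ 2)⁻¹) ^ 2 - (Real.sin a ^ 2)⁻¹ / 3) * x ^ 5 / 5)) =O[𝓝 0] fun x ↦ x ^ 7 := by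
  set c := (Real.sin a ^ 2)⁻¹
  have hpoly (x : ℝ) : HasDerivAt
      (fun x ↦ 2 * Real.cot a * (x + c * x ^ 3 / 3 + (c ^ 2 - c / 3) * x ^ 5 / 5))
      (2 * Real.cot a * (1 + c * x ^ 2 + (c ^ 2 - c / 3) * x ^ 4)) x := by
    refine ((((hasDerivAt_id x).add (((hasDerivAt_pow 3 x).const_mul c).div_const 3)).add
      (((hasDerivAt_pow 5 x).const_mul (c ^ 2 - c / 3)).div_const 5)).const_mul
      (2 * Real.cot a)).congr_deriv ?_
    push_cast
    ring
  have hderiv := (eventually_hasDerivAt_logSinRatio ha).mono fun x hx ↦ hx.sub (hpoly x)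
  have hbound := (inv_one_sub_mul_sin_sq_sub_isBigO c).const_mul_left (2 * Real.cot a)
  simpa [logSinRatio, ha] using sub_isBigO_sub_pow_succ_of_hasDerivAt hderiv
    (by simpa only [sub_zero, mul_sub] using hbound)

theorem integral_logSinRatio_sub_isBigO (ha : Real.sin a ≠ 0) :
    (fun x ↦ (∫ t in (0 : ℝ)..x, logSinRatio a t) - logSinRatioIntegralTaylor a x)
      =O[𝓝 0] fun x ↦ x ^ 8 := by
  set c := (Real.sin a ^ 2)⁻¹
  have hpoly (x : ℝ) : HasDerivAt (logSinRatioIntegralTaylor a)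
      (2 * Real.cot a * (x + c * x ^ 3 / 3 + (c ^ 2 - c / 3) * x ^ 5 / 5)) x := by
    refine ((((hasDerivAt_pow 2 x).add (((hasDerivAt_pow 4 x).const_mul c).div_const 6)).add
      (((hasDerivAt_pow 6 x).const_mul (c ^ 2 - c / 3)).div_const 15)).const_mul
      (Real.cot a)).congr_deriv ?_
    push_cast
    ring
  have hint := eventually_hasDerivAt_integral_of_continuousAt
    ((eventually_hasDerivAt_logSinRatio ha).mono fun x hx ↦ hx.continuousAt)
  have hderiv := hint.mono fun x hx ↦ hx.sub (hpoly x)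
  simpa [logSinRatioIntegralTaylor] using sub_isBigO_sub_pow_succ_of_hasDerivAt hderiv
    (by simpa only [sub_zero] using logSinRatio_sub_isBigO ha)

end LogSinRatio

theorem rateI_eq_integral_logSinRatio (s v : ℝ) :
    rateI s v =
      3 / π * (∫ t in (0 : ℝ)..(π * ((1 - s - v) / 6)), logSinRatio (π / 6) t) +
      6 / π * (∫ t in (0 : ℝ)..(π * ((1 - s + v) / 6)), logSinRatio (π / 6) t) +
      6 / π * (∫ t in (0 : ℝ)..(π * ((1 - s) / 3)), logSinRatio (π / 6 + π / 2) t) := by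
  have hscale (a x : ℝ) : (∫ t in (0 : ℝ)..(π * x), logSinRatio a t) =
      π * ∫ φ in (0 : ℝ)..x, logSinRatio a (π * φ) := by
    simp
  have hsin (φ : ℝ) : logSinRatio (π / 6) (π * φ) =
      Real.log (Real.sin (π * (φ + 1 / 6)) / Real.sin (π * (1 / 6 - φ))) := by
    unfold logSinRatio
    ring_nf
  have hcos (φ : ℝ) : logSinRatio (π / 6 + π / 2) (π * φ) =
      Real.log (Real.cos (π * (φ + 1 / 6)) / Real.cos (π * (1 / 6 - φ))) := by
    rw [logSinRatio, ← Real.sin_add_pi_div_two, ← Real.sin_add_pi_div_two]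
    ring_nf
  simp only [hscale, hsin, hcos, rateI, ← mul_assoc, div_mul_cancel₀ _ Real.pi_ne_zero]

/-- The Taylor polynomial of degree 6 of `rateI` at `(1, 0)`, as the combination of one-variable
Taylor polynomials that matches the three integrals defining `rateI`. -/
noncomputable def rateITaylor (s v : ℝ) : ℝ :=
  3 / π * logSinRatioIntegralTaylor (π / 6) (π * ((1 - s - v) / 6)) +
  6 / π * logSinRatioIntegralTaylor (π / 6) (π * ((1 - s + v) / 6)) +
  6 / π * logSinRatioIntegralTaylor (π / 6 + π / 2) (π * ((1 - s) / 3))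

theorem logSinRatioIntegralTaylor_pi_div_six (x : ℝ) :
    logSinRatioIntegralTaylor (π / 6) x = √3 * (x ^ 2 + 2 / 3 * x ^ 4 + 44 / 45 * x ^ 6) := by
  rw [logSinRatioIntegralTaylor, Real.cot_eq_cos_div_sin, Real.cos_pi_div_six,
    Real.sin_pi_div_six]
  ring

theorem logSinRatioIntegralTaylor_pi_div_six_add_pi_div_two (x : ℝ) :
    logSinRatioIntegralTaylor (π / 6 + π / 2) x =
      -√3 * (x ^ 2 / 3 + 2 / 27 * x ^ 4 + 4 / 135 * x ^ 6) := by
  have hcot : Real.cot (π / 6 + π / 2) = -√3 / 3 := by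
    rw [Real.cot_eq_cos_div_sin, Real.cos_add_pi_div_two, Real.sin_add_pi_div_two,
      Real.cos_pi_div_six, Real.sin_pi_div_six]
    field_simp
    simp
  have hsin : Real.sin (π / 6 + π / 2) ^ 2 = 3 / 4 := by
    rw [Real.sin_add_pi_div_two, Real.sq_cos_pi_div_six]
  rw [logSinRatioIntegralTaylor, hcot, hsin]
  ring

theorem rateITaylor_eq (s v : ℝ) :
    rateITaylor s v =
      Real.sqrt 3 * π / 36 * (s - 1 - 3 * v) ^ 2 -
        Real.sqrt 3 * π ^ 3 / 5832 *
          (5 * (s - 1) ^ 4 + 36 * v * (s - 1) ^ 3 - 162 * v ^ 2 * (s - 1) ^ 2 +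
            36 * v ^ 3 * (s - 1) - 27 * v ^ 4) -
        Real.sqrt 3 * π ^ 5 / 524880 *
          (29 * (s - 1) ^ 6 + 198 * v * (s - 1) ^ 5 - 1485 * v ^ 2 * (s - 1) ^ 4 +
            660 * v ^ 3 * (s - 1) ^ 3 - 1485 * v ^ 4 * (s - 1) ^ 2 +
            198 * v ^ 5 * (s - 1) - 99 * v ^ 6) := by
  rw [rateITaylor, logSinRatioIntegralTaylor_pi_div_six, logSinRatioIntegralTaylor_pi_div_six,
    logSinRatioIntegralTaylor_pi_div_six_add_pi_div_two]
  field_simp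
  ring

theorem rateI_sub_rateITaylor_isBigO :
    (fun p : ℝ × ℝ ↦ rateI p.1 p.2 - rateITaylor p.1 p.2)
      =O[𝓝 (1, 0)] fun p ↦ ‖p - (1, 0)‖ ^ 8 := by
  have hsin : Real.sin (π / 6) ≠ 0 := by simp
  have hcos : Real.sin (π / 6 + π / 2) ≠ 0 := by simp [Real.sin_add_pi_div_two]
  have hcomp {a : ℝ} (ha : Real.sin a ≠ 0) {u : ℝ × ℝ → ℝ} (hu : DifferentiableAt ℝ u (1, 0))
      (hu₀ : u (1, 0) = 0) :
      (fun p ↦ (∫ t in (0 : ℝ)..(u p), logSinRatio a t) - logSinRatioIntegralTaylor a (u p))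
        =O[𝓝 (1, 0)] fun p ↦ ‖p - (1, 0)‖ ^ 8 :=
    comp_isBigO_norm_sub_pow
      (by simpa [hu₀] using (integral_logSinRatio_sub_isBigO ha).norm_right) hu
  have hminus := hcomp hsin (u := fun p ↦ π * ((1 - p.1 - p.2) / 6)) (by fun_prop) (by simp)
  have hplus := hcomp hsin (u := fun p ↦ π * ((1 - p.1 + p.2) / 6)) (by fun_prop) (by simp)
  have hlast := hcomp hcos (u := fun p ↦ π * ((1 - p.1) / 3)) (by fun_prop) (by simp)
  refine (((hminus.const_mul_left (3 / π)).add (hplus.const_mul_left (6 / π))).add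
    (hlast.const_mul_left (6 / π))).congr_left fun p ↦ ?_
  rw [rateI_eq_integral_logSinRatio, rateITaylor]
  ring

/-- The sixth-order Taylor expansion of the rate function `I(s,v)` around `(s,v) = (1,0)`:
`I(s,v) = (√3 π/36)(s−1−3v)² − (√3 π³/5832)[…] − (√3 π⁵/524880)[…] + O(|s−1|⁸ + |v|⁸)`. -/
theorem rateI_taylor_expansion :
    ∃ C : ℝ, 0 < C ∧ ∃ δ : ℝ, 0 < δ ∧ ∀ s v : ℝ, |s - 1| < δ → |v| < δ →
      |rateI s v -
        (Real.sqrt 3 * π / 36 * (s - 1 - 3 * v) ^ 2 -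
          Real.sqrt 3 * π ^ 3 / 5832 *
            (5 * (s - 1) ^ 4 + 36 * v * (s - 1) ^ 3 - 162 * v ^ 2 * (s - 1) ^ 2 +
              36 * v ^ 3 * (s - 1) - 27 * v ^ 4) -
          Real.sqrt 3 * π ^ 5 / 524880 *
            (29 * (s - 1) ^ 6 + 198 * v * (s - 1) ^ 5 - 1485 * v ^ 2 * (s - 1) ^ 4 +
              660 * v ^ 3 * (s - 1) ^ 3 - 1485 * v ^ 4 * (s - 1) ^ 2 +
              198 * v ^ 5 * (s - 1) - 99 * v ^ 6))|
        ≤ C * (|s - 1| ^ 8 + |v| ^ 8) := by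
  obtain ⟨C, hC, hbigO⟩ := rateI_sub_rateITaylor_isBigO.exists_pos
  obtain ⟨δ, hδ, hball⟩ := Metric.eventually_nhds_iff.mp hbigO.bound
  refine ⟨C, hC, δ, hδ, fun s v hs hv ↦ ?_⟩
  have hnorm : ‖(s, v) - ((1, 0) : ℝ × ℝ)‖ = max |s - 1| |v| := by simp [Prod.norm_def]
  have hmax : max |s - 1| |v| ^ 8 ≤ |s - 1| ^ 8 + |v| ^ 8 := by
    rcases max_choice |s - 1| |v| with h | h <;> rw [h] <;> simp
  have herror := hball (y := (s, v)) (by rw [dist_eq_norm, hnorm]; exact max_lt hs hv)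
  rw [hnorm, norm_pow, Real.norm_of_nonneg (le_max_of_le_right (abs_nonneg v))] at herror
  rw [← rateITaylor_eq]
  exact herror.trans (mul_le_mul_of_nonneg_left hmax hC.le)
end
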